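/- arXiv:2605.02254 — 2 statements merged into one kernel-verified Lean document; each statement's English description precedes it below -/
import Mathlib

section
/- Let Cay(D_n, S) be a Cayley graph over the dihedral group D_n (n ≥ 2), let h be an integer with 1 ≤ h ≤ ⌊(n−1)/2⌋ such that η_h(S_2) ≠ 0, and let ℓ ∈ ℂ satisfy ℓ² η_h(S_2) = η_h(S_2^{-1}). Then the vector with entry conj(ℓ)·ω^{hk} at vertex a^k and entry ω^{hk} at vertex b a^k (0 ≤ k ≤ n−1), and the vector with entry ω^{−hk} at a^k and entry conj(ℓ)·ω^{−hk} at b a^k, are both eigenvectors of the adjacency matrix A with eigenvalue η_h(S_1) + ℓ·η_h(S_2). -/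
/-!
Fix a character `ψ` of `ZMod n`. The vectors with entries `x ψ(k)` at `a^k` and `y ψ(k)` at `b a^k`
form a two-dimensional space on which the adjacency matrix acts, in the coordinates `(x, y)`, by
`!![η_{ψ⁻¹}(S₁), η_ψ(S₂); η_{ψ⁻¹}(S₂), η_ψ(S₁)]`. Since `S = S⁻¹`, the diagonal entries agree, and
the off-diagonal ones are complex conjugates. Hence `ℓ² η_ψ(S₂) = η_{ψ⁻¹}(S₂)` forces `|ℓ| = 1`, and
then `(conj ℓ, 1)` is an eigenvector for `η_ψ(S₁) + ℓ η_ψ(S₂)`; replacing `ψ` by `ψ⁻¹` transposes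
the matrix, so there the eigenvector for the same eigenvalue is `(1, conj ℓ)`.
-/

open Polynomial Matrix

noncomputable section

namespace PaperPST

/-! ### Grover-walk PST data for Cayley graphs over a general finite group -/

/-- The adjacency matrix of the Cayley graph `Cay(Γ, S)`: `A u v = 1` iff `u * v⁻¹ ∈ S`. -/
def adjG (Γ : Type*) [Group Γ] [Fintype Γ] [DecidableEq Γ] (S : Finset Γ) : Matrix Γ Γ ℂ :=
  Matrix.of fun u v => if u * v⁻¹ ∈ S then 1 else 0

/-- The discriminant matrix `P = (1/|S|) A` of `Cay(Γ, S)`. -/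
def discG (Γ : Type*) [Group Γ] [Fintype Γ] [DecidableEq Γ] (S : Finset Γ) : Matrix Γ Γ ℂ :=
  (S.card : ℂ)⁻¹ • adjG Γ S

/-- `T_τ(P)`, the `τ`-th Chebyshev polynomial of the first kind evaluated at the
discriminant matrix of `Cay(Γ, S)`. -/
def chebG (Γ : Type*) [Group Γ] [Fintype Γ] [DecidableEq Γ] (S : Finset Γ) (τ : ℕ) :
    Matrix Γ Γ ℂ :=
  Polynomial.aeval (discG Γ S) (Polynomial.Chebyshev.T ℂ τ)

/-- Perfect state transfer between vertices `u` and `v` of `Cay(Γ, S)` at time `τ`: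
`T_τ(P) e_u = e_v`. -/
def PSTG (Γ : Type*) [Group Γ] [Fintype Γ] [DecidableEq Γ] (S : Finset Γ) (τ : ℕ)
    (u v : Γ) : Prop :=
  chebG Γ S τ *ᵥ Pi.single u 1 = Pi.single v 1

/-- Evaluation of the `τ`-th Chebyshev polynomial of the first kind at a complex number. -/
def Teval (τ : ℕ) (x : ℂ) : ℂ := (Polynomial.Chebyshev.T ℂ τ).eval x

/-! ### Specialization to the dihedral group `D_n` -/

/-- Test whether an element of the dihedral group is a rotation `a^k`. -/
def isRot {n : ℕ} : DihedralGroup n → Bool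
  | .r _ => true
  | .sr _ => false

/-- The adjacency matrix of the Cayley graph `Cay(D_n, S)`. -/
def adjC (n : ℕ) (S : Finset (DihedralGroup n)) :
    Matrix (DihedralGroup n) (DihedralGroup n) ℂ :=
  Matrix.of fun u v => if u * v⁻¹ ∈ S then 1 else 0

/-- The discriminant matrix `P = (1/|S|) A` of `Cay(D_n, S)`. -/
def disc (n : ℕ) (S : Finset (DihedralGroup n)) :
    Matrix (DihedralGroup n) (DihedralGroup n) ℂ :=
  (S.card : ℂ)⁻¹ • adjC n S

/-- `T_τ(P)`, the `τ`-th Chebyshev polynomial of the first kind evaluated at the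
discriminant matrix. -/
def chebP (n : ℕ) [NeZero n] (S : Finset (DihedralGroup n)) (τ : ℕ) :
    Matrix (DihedralGroup n) (DihedralGroup n) ℂ :=
  Polynomial.aeval (disc n S) (Polynomial.Chebyshev.T ℂ τ)

/-- Perfect state transfer between vertices `u` and `v` of `Cay(D_n, S)` at time `τ`:
`T_τ(P) e_u = e_v`. -/
def PST (n : ℕ) [NeZero n] (S : Finset (DihedralGroup n)) (τ : ℕ)
    (u v : DihedralGroup n) : Prop :=
  chebP n S τ *ᵥ Pi.single u 1 = Pi.single v 1

/-- `ω = e^{2πi/n}`. -/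
def omega (n : ℕ) : ℂ := Complex.exp (2 * Real.pi * Complex.I / n)

/-- `η_h(C) = Σ_{0 ≤ k ≤ n-1, a^k ∈ C} ω^{hk}`. -/
def eta (n : ℕ) (h : ℕ) (C : Finset (DihedralGroup n)) : ℂ :=
  ∑ k ∈ Finset.range n, if DihedralGroup.r (k : ZMod n) ∈ C then omega n ^ (h * k) else 0

/-- `S_1 = S ∩ ⟨a⟩`. -/
def S1 (n : ℕ) (S : Finset (DihedralGroup n)) : Finset (DihedralGroup n) :=
  S.filter fun x => isRot x

/-- `S_2 = bS ∩ ⟨a⟩`, i.e. `{a^k : b a^k ∈ S}`. -/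
def S2 (n : ℕ) (S : Finset (DihedralGroup n)) : Finset (DihedralGroup n) :=
  (S.image fun s => DihedralGroup.sr 0 * s).filter fun x => isRot x

/-- `S_2⁻¹ = {s⁻¹ : s ∈ S_2}`. -/
def S2inv (n : ℕ) (S : Finset (DihedralGroup n)) : Finset (DihedralGroup n) :=
  (S2 n S).image fun x => x⁻¹

/-- The number of `a^k ∈ C` with `0 ≤ k ≤ n-1` and `k % 2 = p`. -/
def dcnt (n : ℕ) (C : Finset (DihedralGroup n)) (p : ℕ) : ℕ :=
  ((Finset.range n).filter fun k => k % 2 = p ∧ DihedralGroup.r (k : ZMod n) ∈ C).card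

/-- Vertex labels `0, …, 2n-1`: label `u < n` is `a^u`, and label `n ≤ u < 2n` is `b a^{u-n}`. -/
def lab (n : ℕ) (u : ℕ) : DihedralGroup n :=
  if u < n then DihedralGroup.r (u : ZMod n) else DihedralGroup.sr ((u - n : ℕ) : ZMod n)

/-- `Cay(D_n, S)` is a normal Cayley graph if `S` is closed under conjugation. -/
def IsNormalCay (n : ℕ) (S : Finset (DihedralGroup n)) : Prop :=
  ∀ g : DihedralGroup n, ∀ s ∈ S, g * s * g⁻¹ ∈ S

/-- `Cay(D_n, S)` exhibits PST at the minimum time `τ`. -/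
def exhibitsMinPST (n : ℕ) [NeZero n] (S : Finset (DihedralGroup n)) (τ : ℕ) : Prop :=
  (∃ u v : DihedralGroup n, u ≠ v ∧ PST n S τ u v) ∧
  ∀ σ : ℕ, 1 ≤ σ → σ < τ → ∀ u v : DihedralGroup n, u ≠ v → ¬ PST n S σ u v

/-! ### Eigenvector candidates -/

/-- The all-ones vector. -/
def w1 (n : ℕ) : DihedralGroup n → ℂ := fun _ => 1

/-- The vector which is `1` on `G_0` and `-1` on `G_1`. -/
def w2 (n : ℕ) : DihedralGroup n → ℂ
  | .r _ => 1
  | .sr _ => -1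

/-- The vector with entry `(-1)^k` at `a^k` and `(-1)^k` at `b a^k`. -/
def w3 (n : ℕ) : DihedralGroup n → ℂ
  | .r k => (-1) ^ k.val
  | .sr k => (-1) ^ k.val

/-- The vector with entry `(-1)^k` at `a^k` and `(-1)^{k+1}` at `b a^k`. -/
def w4 (n : ℕ) : DihedralGroup n → ℂ
  | .r k => (-1) ^ k.val
  | .sr k => (-1) ^ (k.val + 1)

/-- The vector with entry `ω^{hk}` at `a^k` and `0` at `b a^k`. -/
def uv1 (n h : ℕ) : DihedralGroup n → ℂ
  | .r k => omega n ^ (h * k.val)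
  | .sr _ => 0

/-- The vector with entry `0` at `a^k` and `ω^{hk}` at `b a^k`. -/
def uv2 (n h : ℕ) : DihedralGroup n → ℂ
  | .r _ => 0
  | .sr k => omega n ^ (h * k.val)

/-- The vector with entry `0` at `a^k` and `ω^{-hk}` at `b a^k`. -/
def uv3 (n h : ℕ) : DihedralGroup n → ℂ
  | .r _ => 0
  | .sr k => (omega n)⁻¹ ^ (h * k.val)

/-- The vector with entry `ω^{-hk}` at `a^k` and `0` at `b a^k`. -/
def uv4 (n h : ℕ) : DihedralGroup n → ℂ
  | .r k => (omega n)⁻¹ ^ (h * k.val)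
  | .sr _ => 0

/-- The vector with entry `conj(ℓ)·ω^{hk}` at `a^k` and `ω^{hk}` at `b a^k`. -/
def vv1 (n h : ℕ) (ℓ : ℂ) : DihedralGroup n → ℂ
  | .r k => (starRingEnd ℂ) ℓ * omega n ^ (h * k.val)
  | .sr k => omega n ^ (h * k.val)

/-- The vector with entry `ω^{-hk}` at `a^k` and `conj(ℓ)·ω^{-hk}` at `b a^k`. -/
def vv2 (n h : ℕ) (ℓ : ℂ) : DihedralGroup n → ℂ
  | .r k => (omega n)⁻¹ ^ (h * k.val)
  | .sr k => (starRingEnd ℂ) ℓ * (omega n)⁻¹ ^ (h * k.val)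

/-- The vector with entry `-ω^{hk}` at `a^k` and `ℓ·ω^{hk}` at `b a^k`. -/
def vv3 (n h : ℕ) (ℓ : ℂ) : DihedralGroup n → ℂ
  | .r k => -(omega n ^ (h * k.val))
  | .sr k => ℓ * omega n ^ (h * k.val)

/-- The vector with entry `ℓ·ω^{-hk}` at `a^k` and `-ω^{-hk}` at `b a^k`. -/
def vv4 (n h : ℕ) (ℓ : ℂ) : DihedralGroup n → ℂ
  | .r k => ℓ * (omega n)⁻¹ ^ (h * k.val)
  | .sr k => -((omega n)⁻¹ ^ (h * k.val))

theorem adjG_mulVec_apply {Γ : Type*} [Group Γ] [Fintype Γ] [DecidableEq Γ] (S : Finset Γ)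
    (f : Γ → ℂ) (u : Γ) : (adjG Γ S *ᵥ f) u = ∑ s ∈ S, f (s⁻¹ * u) := by
  calc (adjG Γ S *ᵥ f) u = ∑ v, if u * v⁻¹ ∈ S then f v else 0 := by
        simp [adjG, mulVec, dotProduct]
    _ = ∑ s, if s ∈ S then f (s⁻¹ * u) else 0 := by
        rw [← ((Equiv.inv Γ).trans (Equiv.mulRight u)).sum_comp]
        simp
    _ = ∑ s ∈ S, f (s⁻¹ * u) := by simp

theorem sum_range_natCast_zmod {M : Type*} [AddCommMonoid M] (n : ℕ) [NeZero n]
    (f : ZMod n → M) : ∑ k ∈ Finset.range n, f k = ∑ k, f k := by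
  refine Finset.sum_bij' (fun k _ => (k : ZMod n)) (fun k _ => k.val) ?_ ?_ ?_ ?_ ?_ <;>
    simp +contextual [ZMod.val_lt, Nat.mod_eq_of_lt]

theorem conj_mul_self_eq_one_of_sq_mul_eq_conj {K : Type*} [RCLike K] {ℓ z : K} (hz : z ≠ 0)
    (h : ℓ ^ 2 * z = starRingEnd K z) : starRingEnd K ℓ * ℓ = 1 := by
  have hnorm : ‖ℓ‖ ^ 2 * ‖z‖ = 1 * ‖z‖ := by
    rw [← norm_pow, ← norm_mul, h, RCLike.norm_conj, one_mul]
  have hsq : ‖ℓ‖ ^ 2 = 1 := mul_right_cancel₀ (norm_ne_zero_iff.mpr hz) hnorm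
  rw [RCLike.conj_mul]
  exact_mod_cast hsq

section Dihedral

variable {n : ℕ} {R : Type*} [CommSemiring R]

/-- The vector with entry `x ψ(k)` at `a^k` and `y ψ(k)` at `b a^k`. For fixed `ψ` these vectors
form a two-dimensional space that every Cayley graph on `D_n` leaves invariant. -/
def charVec (ψ : AddChar (ZMod n) R) (x y : R) : DihedralGroup n → R
  | .r k => x * ψ k
  | .sr k => y * ψ k

theorem smul_charVec (ψ : AddChar (ZMod n) R) (c x y : R) :
    c • charVec ψ x y = charVec ψ (c * x) (c * y) := by
  ext (k | k) <;> simp [charVec, mul_assoc]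

theorem charVec_eq_zero_iff {ψ : AddChar (ZMod n) R} {x y : R} :
    charVec ψ x y = 0 ↔ x = 0 ∧ y = 0 := by
  refine ⟨fun h => ⟨?_, ?_⟩, ?_⟩
  · simpa [charVec] using congrFun h (.r 0)
  · simpa [charVec] using congrFun h (.sr 0)
  · rintro ⟨rfl, rfl⟩
    ext (k | k) <;> simp [charVec]

theorem r_mem_S1 {S : Finset (DihedralGroup n)} {k : ZMod n} : .r k ∈ S1 n S ↔ .r k ∈ S := by
  rw [S1, Finset.mem_filter, and_iff_left (show isRot (.r k) from rfl)]

theorem r_mem_S2 {S : Finset (DihedralGroup n)} {k : ZMod n} : .r k ∈ S2 n S ↔ .sr k ∈ S := by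
  have sr_zero_mul_eq_r (s : DihedralGroup n) : .sr 0 * s = .r k ↔ s = .sr k := by
    cases s <;> simp
  rw [S2, Finset.mem_filter, and_iff_left (show isRot (.r k) from rfl)]
  simp only [Finset.mem_image, sr_zero_mul_eq_r, exists_eq_right]

variable [NeZero n]

theorem sum_eq_sum_S1_add_sum_S2 {M : Type*} [AddCommMonoid M] (S : Finset (DihedralGroup n))
    (f : DihedralGroup n → M) :
    ∑ s ∈ S, f s =
      ∑ k with .r k ∈ S1 n S, f (.r k) + ∑ k with .r k ∈ S2 n S, f (.sr k) := by
  simp only [r_mem_S1, r_mem_S2, Finset.sum_filter]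
  rw [← Fintype.sum_ite_mem, ← DihedralGroup.equivSum.symm.sum_comp, Fintype.sum_sum_type]
  rfl

/-- The character sum `η_ψ(C) = ∑_{a^k ∈ C} ψ(k)` over the rotations in `C`, for an arbitrary
character `ψ` of `ZMod n`; `eta n h` is the case `ψ(k) = ω^{hk}`. -/
def charSum (ψ : AddChar (ZMod n) R) (C : Finset (DihedralGroup n)) : R :=
  ∑ k with .r k ∈ C, ψ k

open scoped Pointwise in
theorem charSum_inv (ψ : AddChar (ZMod n) R) (C : Finset (DihedralGroup n)) :
    charSum ψ⁻¹ C = charSum ψ C⁻¹ := by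
  simp only [charSum, Finset.sum_filter, AddChar.inv_apply]
  refine Fintype.sum_equiv (Equiv.neg (ZMod n)) _ _ fun k => ?_
  simp [Finset.mem_inv']

open scoped Pointwise in
theorem charSum_inv_S1 (ψ : AddChar (ZMod n) R) {S : Finset (DihedralGroup n)}
    (hSinv : ∀ s ∈ S, s⁻¹ ∈ S) : charSum ψ⁻¹ (S1 n S) = charSum ψ (S1 n S) := by
  have r_neg_mem (k : ZMod n) : .r (-k) ∈ S ↔ .r k ∈ S :=
    ⟨fun hk => by simpa using hSinv _ hk, fun hk => by simpa using hSinv _ hk⟩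
  rw [charSum_inv]
  simp [charSum, Finset.mem_inv', r_mem_S1, r_neg_mem]

theorem conj_charSum {K : Type*} [RCLike K] (ψ : AddChar (ZMod n) K)
    (C : Finset (DihedralGroup n)) : starRingEnd K (charSum ψ C) = charSum ψ⁻¹ C := by
  simp [charSum, AddChar.map_neg_eq_conj]

theorem adjC_mulVec_charVec (S : Finset (DihedralGroup n)) (ψ : AddChar (ZMod n) ℂ) (x y : ℂ) :
    adjC n S *ᵥ charVec ψ x y =
      charVec ψ (charSum ψ⁻¹ (S1 n S) * x + charSum ψ (S2 n S) * y)
        (charSum ψ⁻¹ (S2 n S) * x + charSum ψ (S1 n S) * y) := by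
  ext u
  change (adjG (DihedralGroup n) S *ᵥ charVec ψ x y) u = _
  rw [adjG_mulVec_apply, sum_eq_sum_S1_add_sum_S2]
  cases u <;>
    simp only [charVec, charSum, add_mul, Finset.sum_mul, DihedralGroup.inv_r,
      DihedralGroup.inv_sr, DihedralGroup.r_mul_r, DihedralGroup.r_mul_sr,
      DihedralGroup.sr_mul_r, DihedralGroup.sr_mul_sr, sub_eq_add_neg, neg_neg,
      AddChar.map_add_eq_mul, AddChar.inv_apply]
  · congr 1 <;> exact Finset.sum_congr rfl fun k _ => by ring
  · rw [add_comm]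
    congr 1 <;> exact Finset.sum_congr rfl fun k _ => by ring

theorem adjC_mulVec_charVec_eq_smul {S : Finset (DihedralGroup n)} (hSinv : ∀ s ∈ S, s⁻¹ ∈ S)
    (ψ : AddChar (ZMod n) ℂ) {x y μ : ℂ}
    (hx : charSum ψ (S1 n S) * x + charSum ψ (S2 n S) * y = μ * x)
    (hy : charSum ψ⁻¹ (S2 n S) * x + charSum ψ (S1 n S) * y = μ * y) :
    adjC n S *ᵥ charVec ψ x y = μ • charVec ψ x y := by
  rw [adjC_mulVec_charVec, charSum_inv_S1 ψ hSinv, hx, hy, smul_charVec]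

theorem stdAddChar_eq_omega_pow_val (k : ZMod n) : ZMod.stdAddChar k = omega n ^ k.val := by
  have h := ZMod.stdAddChar_coe (N := n) (k.val : ℤ)
  rw [Int.cast_natCast, ZMod.natCast_zmod_val] at h
  rw [h, omega, ← Complex.exp_nat_mul]
  push_cast
  ring_nf

theorem stdAddChar_pow_apply (h : ℕ) (k : ZMod n) :
    (ZMod.stdAddChar ^ h : AddChar (ZMod n) ℂ) k = omega n ^ (h * k.val) := by
  rw [AddChar.pow_apply, stdAddChar_eq_omega_pow_val, ← pow_mul, mul_comm]

theorem inv_stdAddChar_pow_apply (h : ℕ) (k : ZMod n) :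
    (ZMod.stdAddChar ^ h : AddChar (ZMod n) ℂ)⁻¹ k = (omega n)⁻¹ ^ (h * k.val) := by
  rw [AddChar.inv_apply', stdAddChar_pow_apply, inv_pow]

theorem eta_eq_charSum (h : ℕ) (C : Finset (DihedralGroup n)) :
    eta n h C = charSum (ZMod.stdAddChar ^ h) C := by
  rw [eta, charSum, Finset.sum_filter, ← sum_range_natCast_zmod]
  refine Finset.sum_congr rfl fun k hk => ?_
  rw [stdAddChar_pow_apply, ZMod.val_cast_of_lt (Finset.mem_range.mp hk)]

theorem eta_S2inv_eq_charSum_inv (h : ℕ) (S : Finset (DihedralGroup n)) :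
    eta n h (S2inv n S) = charSum (ZMod.stdAddChar ^ h)⁻¹ (S2 n S) := by
  rw [charSum_inv, eta_eq_charSum]
  rfl

theorem vv1_eq_charVec (h : ℕ) (ℓ : ℂ) :
    vv1 n h ℓ = charVec (ZMod.stdAddChar ^ h) (starRingEnd ℂ ℓ) 1 := by
  ext (k | k) <;> simp only [vv1, charVec, stdAddChar_pow_apply, one_mul]

theorem vv2_eq_charVec (h : ℕ) (ℓ : ℂ) :
    vv2 n h ℓ = charVec (ZMod.stdAddChar ^ h)⁻¹ 1 (starRingEnd ℂ ℓ) := by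
  ext (k | k) <;> simp only [vv2, charVec, inv_stdAddChar_pow_apply, one_mul]

end Dihedral

theorem stmt_3_general (n : ℕ) [NeZero n] (S : Finset (DihedralGroup n))
    (hSinv : ∀ s ∈ S, s⁻¹ ∈ S) (h : ℕ) (hnz : eta n h (S2 n S) ≠ 0)
    (ℓ : ℂ) (hℓ : ℓ ^ 2 * eta n h (S2 n S) = eta n h (S2inv n S)) :
    (adjC n S *ᵥ vv1 n h ℓ =
      (eta n h (S1 n S) + ℓ * eta n h (S2 n S)) • vv1 n h ℓ ∧ vv1 n h ℓ ≠ 0) ∧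
    (adjC n S *ᵥ vv2 n h ℓ =
      (eta n h (S1 n S) + ℓ * eta n h (S2 n S)) • vv2 n h ℓ ∧ vv2 n h ℓ ≠ 0) := by
  rw [eta_S2inv_eq_charSum_inv] at hℓ
  simp only [eta_eq_charSum, vv1_eq_charVec, vv2_eq_charVec, ne_eq, charVec_eq_zero_iff,
    one_ne_zero, and_false, false_and, not_false_eq_true, and_true] at hnz hℓ ⊢
  set ψ : AddChar (ZMod n) ℂ := ZMod.stdAddChar ^ h
  have hunit : starRingEnd ℂ ℓ * ℓ = 1 :=
    conj_mul_self_eq_one_of_sq_mul_eq_conj hnz (hℓ.trans (conj_charSum ψ _).symm)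
  constructor
  · apply adjC_mulVec_charVec_eq_smul hSinv
    · linear_combination -charSum ψ (S2 n S) * hunit
    · linear_combination -starRingEnd ℂ ℓ * hℓ + ℓ * charSum ψ (S2 n S) * hunit
  · apply adjC_mulVec_charVec_eq_smul hSinv <;> rw [charSum_inv_S1 ψ hSinv]
    · linear_combination -starRingEnd ℂ ℓ * hℓ + ℓ * charSum ψ (S2 n S) * hunit
    · rw [inv_inv]
      linear_combination -charSum ψ (S2 n S) * hunit

theorem stmt_3 (n : ℕ) [NeZero n] (hn : 2 ≤ n)
    (S : Finset (DihedralGroup n)) (hS1 : (1 : DihedralGroup n) ∉ S)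
    (hSinv : ∀ s ∈ S, s⁻¹ ∈ S) (hSne : S.Nonempty)
    (h : ℕ) (hh1 : 1 ≤ h) (hh2 : h ≤ (n - 1) / 2) (hnz : eta n h (S2 n S) ≠ 0)
    (ℓ : ℂ) (hℓ : ℓ ^ 2 * eta n h (S2 n S) = eta n h (S2inv n S)) :
    (adjC n S *ᵥ vv1 n h ℓ =
      (eta n h (S1 n S) + ℓ * eta n h (S2 n S)) • vv1 n h ℓ ∧ vv1 n h ℓ ≠ 0) ∧
    (adjC n S *ᵥ vv2 n h ℓ =
      (eta n h (S1 n S) + ℓ * eta n h (S2 n S)) • vv2 n h ℓ ∧ vv2 n h ℓ ≠ 0) :=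
  stmt_3_general n S hSinv h hnz ℓ hℓ

end PaperPST
end
end

section
/- Let G = Cay(Γ, S) be a Cayley graph over a finite group Γ. If PST occurs between some pair of distinct vertices of G at time τ, then T_τ(μ) ∈ {−1, 1} for every eigenvalue μ of the discriminant matrix P (that is, for every μ such that P x = μ x for some nonzero vector x). -/
/-!
Right translations act transitively on the vertices of `Cay(Γ, S)` by automorphisms, and `S = S⁻¹`
makes `P` symmetric. More generally, let `P` be any symmetric matrix invariant under a transitive
action, and let `M = p(P)` for a polynomial `p`; then `M` is symmetric and invariant too. If `M` maps
one standard basis vector to a standard basis vector, invariance makes it do so to all of them, say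
`M e_w = e_{f w}`. The `(f w, w)` entry of `M` is then `1`, and so by symmetry is the `(w, f w)`
entry. As `M e_{f w} = e_{f (f w)}`, this says `f (f w) = w`. Hence `M² = 1`, so the eigenvalues of
`M` are `±1`; among them are the values `p(μ)` at the eigenvalues `μ` of `P`.
-/

open Polynomial Matrix

noncomputable section

namespace PaperPST

section PolynomialOfMatrix

variable {m n R A : Type*} [Fintype m] [DecidableEq m] [Fintype n] [DecidableEq n]

lemma submatrix_aeval [CommSemiring R] [Semiring A] [Algebra R A] (P : Matrix n n A) (p : R[X])
    (e : m ≃ n) : (aeval P p).submatrix e e = aeval (P.submatrix e e) p :=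
  (aeval_algHom_apply (reindexAlgEquiv R A e.symm) P p).symm

lemma isSymm_aeval [CommSemiring R] [CommSemiring A] [Algebra R A] {P : Matrix n n A}
    (hP : P.IsSymm) (p : R[X]) : (aeval P p).IsSymm := by
  simp only [IsSymm, aeval_eq_sum_range, transpose_sum, transpose_smul, (hP.pow _).eq]

lemma aeval_mulVec_of_mulVec_eq_smul [CommRing R] {P : Matrix n n R} {x : n → R} {μ : R}
    (hx : P *ᵥ x = μ • x) (p : R[X]) : aeval P p *ᵥ x = p.eval μ • x := by
  rw [← toLinAlgEquiv'_apply, ← aeval_algHom_apply]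
  exact Module.End.aeval_apply_of_mem_apply_eq_smul hx

end PolynomialOfMatrix

section BasisVectors

variable {G V R : Type*} [Fintype V] [DecidableEq V] [NonAssocSemiring R] {M : Matrix V V R}

lemma mulVec_single_smul_of_submatrix_smul_eq [Group G] [MulAction G V] {g : G} {u v : V}
    (hM : M.submatrix (g • ·) (g • ·) = M) (huv : M *ᵥ Pi.single u 1 = Pi.single v 1) :
    M *ᵥ Pi.single (g • u) 1 = Pi.single (g • v) 1 := by
  ext w
  obtain ⟨w, rfl⟩ := MulAction.surjective g w
  have hentry : M (g • w) (g • u) = M w u := congrFun₂ hM w u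
  simpa [hentry, Pi.single_apply] using congrFun huv w

lemma exists_mulVec_single_eq_single_of_isPretransitive [Group G] [MulAction G V]
    [MulAction.IsPretransitive G V] (hM : ∀ g : G, M.submatrix (g • ·) (g • ·) = M) {u v : V}
    (huv : M *ᵥ Pi.single u 1 = Pi.single v 1) (w : V) :
    ∃ w', M *ᵥ Pi.single w 1 = Pi.single w' 1 := by
  obtain ⟨g, rfl⟩ := MulAction.exists_smul_eq G u w
  exact ⟨g • v, mulVec_single_smul_of_submatrix_smul_eq (hM g) huv⟩

lemma eq_of_isSymm_of_mulVec_single_eq_single [Nontrivial R] (hM : M.IsSymm) {u v w : V}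
    (huv : M *ᵥ Pi.single u 1 = Pi.single v 1) (hvw : M *ᵥ Pi.single v 1 = Pi.single w 1) :
    w = u := by
  have hMvu : M v u = 1 := by simpa using congrFun huv v
  have hMuv : M u v = (Pi.single w 1 : V → R) u := by simpa using congrFun hvw u
  by_contra hne
  rw [hM.apply, hMvu, Pi.single_eq_of_ne' hne] at hMuv
  exact one_ne_zero hMuv

end BasisVectors

section Involution

variable {V R : Type*} [Fintype V] [DecidableEq V] {M : Matrix V V R}

lemma mul_self_eq_one_of_isSymm_of_mulVec_single_eq_single [Semiring R] (hM : M.IsSymm)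
    (hbasis : ∀ w, ∃ w', M *ᵥ Pi.single w 1 = Pi.single w' 1) : M * M = 1 := by
  nontriviality R
  refine ext_of_mulVec_single fun u ↦ ?_
  obtain ⟨v, huv⟩ := hbasis u
  obtain ⟨w, hvw⟩ := hbasis v
  rw [← mulVec_mulVec, huv, hvw, one_mulVec, eq_of_isSymm_of_mulVec_single_eq_single hM huv hvw]

lemma eq_one_or_eq_neg_one_of_mul_self_eq_one_of_mulVec_eq_smul [CommRing R] [IsDomain R]
    (hM : M * M = 1) {x : V → R} (hx : x ≠ 0) {c : R} (hc : M *ᵥ x = c • x) :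
    c = 1 ∨ c = -1 := by
  have hsq : (c * c) • x = (1 : R) • x :=
    calc (c * c) • x = M *ᵥ (M *ᵥ x) := by rw [hc, mulVec_smul, hc, smul_smul]
      _ = (1 : R) • x := by rw [mulVec_mulVec, hM, one_mulVec, one_smul]
  exact mul_self_eq_one_iff.mp (smul_left_injective R hx hsq)

end Involution

section CayleyGraph

variable {Γ : Type*} [Group Γ] [Fintype Γ] [DecidableEq Γ] {S : Finset Γ}

lemma isSymm_discG (hSinv : ∀ s ∈ S, s⁻¹ ∈ S) : (discG Γ S).IsSymm := by
  refine IsSymm.smul (IsSymm.ext fun u v ↦ ?_) _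
  have hmem : v * u⁻¹ ∈ S ↔ u * v⁻¹ ∈ S :=
    ⟨fun h ↦ by simpa using hSinv _ h, fun h ↦ by simpa using hSinv _ h⟩
  simp only [adjG, of_apply, hmem]

lemma discG_submatrix_op_smul (g : Γᵐᵒᵖ) :
    (discG Γ S).submatrix (g • ·) (g • ·) = discG Γ S := by
  ext u v
  simp [discG, adjG, MulOpposite.smul_eq_mul_unop]

end CayleyGraph

theorem stmt_7_general (G : Type*) {V R : Type*} [Group G] [MulAction G V]
    [MulAction.IsPretransitive G V] [Fintype V] [DecidableEq V] [CommRing R] [IsDomain R]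
    {P : Matrix V V R} (hPsymm : P.IsSymm) (hPinv : ∀ g : G, P.submatrix (g • ·) (g • ·) = P)
    {p : R[X]} {u v : V} (huv : aeval P p *ᵥ Pi.single u 1 = Pi.single v 1)
    {μ : R} {x : V → R} (hx : x ≠ 0) (hμ : P *ᵥ x = μ • x) :
    p.eval μ = 1 ∨ p.eval μ = -1 := by
  have hMinv (g : G) : (aeval P p).submatrix (g • ·) (g • ·) = aeval P p :=
    (submatrix_aeval P p (MulAction.toPerm g)).trans (congrArg (aeval · p) (hPinv g))
  have hMsq : aeval P p * aeval P p = 1 :=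
    mul_self_eq_one_of_isSymm_of_mulVec_single_eq_single (isSymm_aeval hPsymm p)
      (exists_mulVec_single_eq_single_of_isPretransitive hMinv huv)
  exact eq_one_or_eq_neg_one_of_mul_self_eq_one_of_mulVec_eq_smul hMsq hx
    (aeval_mulVec_of_mulVec_eq_smul hμ p)

theorem stmt_7 (Γ : Type*) [Group Γ] [Fintype Γ] [DecidableEq Γ]
    (S : Finset Γ) (hS1 : (1 : Γ) ∉ S) (hSinv : ∀ s ∈ S, s⁻¹ ∈ S) (hSne : S.Nonempty)
    (τ : ℕ) (hτ : 1 ≤ τ) (u v : Γ) (huv : u ≠ v) (hpst : PSTG Γ S τ u v) :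
    ∀ μ : ℂ, (∃ x : Γ → ℂ, x ≠ 0 ∧ discG Γ S *ᵥ x = μ • x) →
      Teval τ μ = 1 ∨ Teval τ μ = -1 := by
  rintro μ ⟨x, hx, hμ⟩
  exact stmt_7_general Γᵐᵒᵖ (isSymm_discG hSinv) discG_submatrix_op_smul hpst hx hμ

end PaperPST
end
end
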